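/- arXiv:1506.06531 — 2 statements merged into one kernel-verified Lean document; each statement's English description precedes it below -/
import Mathlib

section
/- The Fredholm determinant of the sine kernel on (0,s) has small-s expansion det(I − ξ𝕂_s) = 1 − ξs + (ξ²π²/36)s⁴ − (ξ²π⁴/675)s⁶ + O(s⁸) for any fixed ξ. -/
open Real Filter Asymptotics MeasureTheory
open scoped Topology

/-- The sine kernel `K(x,y) = sin(π(x−y))/(π(x−y))`, with `K(x,x) = 1`. -/
noncomputable def sineKernel (x y : ℝ) : ℝ :=
  if x = y then 1 else Real.sin (Real.pi * (x - y)) / (Real.pi * (x - y))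

/-- The Fredholm determinant `det(I − ξ𝕂ₛ)` of the sine kernel on `(0,s)`,
defined via the Fredholm series
`∑_{j≥0} ((−ξ)^j/j!) ∫_{(0,s)^j} det[K(x_a,x_b)] dx₁⋯dx_j`. -/
noncomputable def sineFredholmDet (ξ s : ℝ) : ℝ :=
  ∑' j : ℕ, ((-ξ) ^ j / (Nat.factorial j : ℝ)) *
    ∫ x : Fin j → ℝ in Set.univ.pi (fun _ => Set.Ioo 0 s),
      Matrix.det (Matrix.of fun a b => sineKernel (x a) (x b))

lemma sineKernel_eq (x y : ℝ) : sineKernel x y = Real.sinc (π * (x - y)) := by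
  unfold sineKernel Real.sinc
  by_cases h : x = y
  · simp [h]
  · have : π * (x - y) ≠ 0 := mul_ne_zero pi_ne_zero (sub_ne_zero.mpr h)
    rw [if_neg h, if_neg this]

lemma sin_taylor (p : ℝ) (hp : |p| ≤ 1) :
    |Real.sin p - (p - p ^ 3 / 6 + p ^ 5 / 120)| ≤ |p| ^ 7 := by
  have h := Complex.exp_bound (x := (p : ℂ) * Complex.I) (by simpa using hp) (n := 7) (by norm_num)
  have h2 := (Complex.abs_im_le_norm _).trans h
  rw [Complex.sub_im, Complex.exp_ofReal_mul_I_im] at h2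
  have e : (∑ m ∈ Finset.range 7, ((p : ℂ) * Complex.I) ^ m / (m.factorial : ℂ)).im
      = p - p ^ 3 / 6 + p ^ 5 / 120 := by
    have : (∑ m ∈ Finset.range 7, ((p : ℂ) * Complex.I) ^ m / (m.factorial : ℂ))
      = ((1 - p ^ 2 / 2 + p ^ 4 / 24 - p ^ 6 / 720 : ℝ) : ℂ)
        + ((p - p ^ 3 / 6 + p ^ 5 / 120 : ℝ) : ℂ) * Complex.I := by
      have i2 : Complex.I ^ 2 = -1 := Complex.I_sq
      have i3 : Complex.I ^ 3 = -Complex.I := by rw [pow_succ, i2]; ring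
      have i4 : Complex.I ^ 4 = 1 := Complex.I_pow_four
      have i5 : Complex.I ^ 5 = Complex.I := by rw [pow_succ, i4]; ring
      have i6 : Complex.I ^ 6 = -1 := by rw [pow_succ, i5, ← sq, i2]
      simp only [Finset.sum_range_succ, Finset.sum_range_zero, Nat.factorial, mul_pow, i2, i3, i4, i5, i6]
      push_cast
      ring
    rw [this, Complex.add_im, Complex.ofReal_im, Complex.im_ofReal_mul]
    simp
  rw [e] at h2
  refine h2.trans ?_
  simp only [norm_mul, Complex.norm_I, mul_one, Complex.norm_real, Real.norm_eq_abs]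
  have : (0 : ℝ) ≤ |p| ^ 7 := by positivity
  norm_num [Nat.factorial]
  nlinarith

lemma sinc_taylor (p : ℝ) (hp : |p| ≤ 1) :
    |Real.sinc p - (1 - p ^ 2 / 6 + p ^ 4 / 120)| ≤ p ^ 6 := by
  by_cases h : p = 0
  · simp [h]
  · have h1 := sin_taylor p hp
    rw [Real.sinc_of_ne_zero h]
    have e : Real.sin p - (p - p ^ 3 / 6 + p ^ 5 / 120)
      = p * (Real.sin p / p - (1 - p ^ 2 / 6 + p ^ 4 / 120)) := by field_simp
    have e7 : |p| ^ 7 = |p| * p ^ 6 := by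
      rw [pow_succ', (by decide : Even 6).pow_abs]
    rw [e, abs_mul, e7] at h1
    exact le_of_mul_le_mul_left h1 (abs_pos.mpr h)

lemma sinc_taylor4 (p : ℝ) (hp : |p| ≤ 1) : |Real.sinc p - (1 - p ^ 2 / 6)| ≤ 2 * p ^ 4 := by
  have h1 := sinc_taylor p hp
  have h2 : p ^ 2 ≤ 1 := by rwa [sq_le_one_iff_abs_le_one]
  have h3 : 0 ≤ p ^ 4 := by positivity
  have h4 : p ^ 6 ≤ p ^ 4 := by nlinarith
  rw [abs_le] at *
  constructor <;> linarith

lemma sinc_taylor2 (p : ℝ) (hp : |p| ≤ 1) : |Real.sinc p - 1| ≤ 2 * p ^ 2 := by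
  have h1 := sinc_taylor p hp
  have h2 : p ^ 2 ≤ 1 := by rwa [sq_le_one_iff_abs_le_one]
  have h5 : 0 ≤ p ^ 2 := by positivity
  have h3 : 0 ≤ p ^ 4 := by positivity
  have h4 : p ^ 6 ≤ p ^ 4 := by nlinarith
  have h6 : p ^ 4 ≤ p ^ 2 := by nlinarith
  rw [abs_le] at *
  constructor <;> linarith

lemma kernel_arg {s x y : ℝ} (hs : π * s ≤ 1) (hx : x ∈ Set.Ioo 0 s) (hy : y ∈ Set.Ioo 0 s) :
    |π * (x - y)| ≤ π * s ∧ |π * (x - y)| ≤ 1 ∧ (π * (x - y)) ^ 2 ≤ (π * s) ^ 2 := by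
  have h : |π * (x - y)| ≤ π * s := by
    rw [abs_mul, abs_of_pos pi_pos]
    gcongr
    rw [abs_le]
    constructor <;> linarith [hx.1, hx.2, hy.1, hy.2]
  refine ⟨h, h.trans hs, ?_⟩
  rw [← sq_abs]
  gcongr

/-- Determinant bound. -/
lemma det_bound (n : ℕ) {s : ℝ} (hs0 : 0 < s) (hs : π * s ≤ 1) (x : Fin (n + 1) → ℝ)
    (hx : ∀ i, x i ∈ Set.Ioo 0 s) :
    |Matrix.det (Matrix.of fun a b => sineKernel (x a) (x b))|
      ≤ ((n + 1).factorial : ℝ) * (4 * (π * s) ^ 2) ^ n := by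
  set h : ℝ := 4 * (π * s) ^ 2 with hh
  have hpos : 0 < h := by positivity
  have hK : ∀ a b, |sineKernel (x a) (x b) - 1| ≤ h / 2 := by
    intro a b
    obtain ⟨_, h1, h2⟩ := kernel_arg hs (hx a) (hx b)
    rw [sineKernel_eq]
    refine (sinc_taylor2 _ h1).trans ?_
    linarith
  let v : Fin (n + 1) → ℝ := Fin.cons 1 (fun _ => h)
  let A : Matrix (Fin (n + 1)) (Fin (n + 1)) ℝ := fun i j =>
    (Fin.cons (sineKernel (x 0) (x j))
      (fun k : Fin n => (sineKernel (x k.succ) (x j) - sineKernel (x 0) (x j)) / h) :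
        Fin (n + 1) → ℝ) i
  have e : Matrix.det (Matrix.of fun a b => sineKernel (x a) (x b))
      = Matrix.det (Matrix.of fun i j => v i * A i j) := by
    refine Matrix.det_eq_of_forall_row_eq_smul_add_const (Fin.cons 0 (fun _ => 1)) 0 rfl ?_
    intro i j
    refine Fin.cases ?_ (fun k => ?_) i
    · simp [v, A]
    · simp [v, A]
      field_simp
      ring
  have hA : ∀ i j, AbsoluteValue.abs (A i j) ≤ 1 := by
    intro i j
    refine Fin.cases ?_ (fun k => ?_) i
    · simp only [A, Fin.cons_zero, AbsoluteValue.abs_apply, sineKernel_eq]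
      exact Real.abs_sinc_le_one _
    · simp only [A, Fin.cons_succ, AbsoluteValue.abs_apply]
      rw [abs_div, abs_of_pos hpos, div_le_one hpos]
      have h1 := abs_le.mp (hK k.succ j)
      have h2 := abs_le.mp (hK 0 j)
      rw [abs_le]
      constructor <;> linarith [h1.1, h1.2, h2.1, h2.2]
  have hd := Matrix.det_le hA
  rw [e, Matrix.det_mul_column, abs_mul]
  have hv : |∏ i, v i| = h ^ n := by
    simp [v, Fin.prod_univ_succ, abs_of_pos hpos]
  rw [hv]
  simp only [AbsoluteValue.abs_apply, Fintype.card_fin, one_pow, nsmul_eq_mul, mul_one] at hd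
  rw [mul_comm]
  gcongr

lemma vol_box (j : ℕ) {s : ℝ} (hs0 : 0 < s) :
    volume.real (Set.univ.pi (fun _ : Fin j => Set.Ioo 0 s)) = s ^ j := by
  have := Real.volume_pi_Ioo_toReal (a := fun _ : Fin j => (0:ℝ)) (b := fun _ => s)
    (fun _ => hs0.le)
  simpa [Measure.real] using this

lemma vol_box_lt (j : ℕ) {s : ℝ} :
    volume (Set.univ.pi (fun _ : Fin j => Set.Ioo 0 s)) < ⊤ := by
  rw [Real.volume_pi_Ioo]
  exact ENNReal.prod_lt_top (fun _ _ => ENNReal.ofReal_lt_top)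

lemma int_bound (n : ℕ) {s : ℝ} (hs0 : 0 < s) (hs : π * s ≤ 1) :
    |∫ x : Fin (n + 1) → ℝ in Set.univ.pi (fun _ => Set.Ioo 0 s),
      Matrix.det (Matrix.of fun a b => sineKernel (x a) (x b))|
      ≤ ((n + 1).factorial : ℝ) * (4 * (π * s) ^ 2) ^ n * s ^ (n + 1) := by
  rw [← vol_box (n + 1) hs0, ← Real.norm_eq_abs]
  refine norm_setIntegral_le_of_norm_le_const (vol_box_lt _) ?_
  intro x hx
  exact det_bound n hs0 hs x (fun i => hx i trivial)

lemma det3_alg {s a b c p q : ℝ} (hs : 0 ≤ s) (hs1 : s ≤ 1) (hp : |p| ≤ s) (hq : |q| ≤ s)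
    (hpq : |p + q| ≤ s)
    (ha : |a - (1 - p ^ 2 / 6)| ≤ 2 * p ^ 4) (hb : |b - (1 - q ^ 2 / 6)| ≤ 2 * q ^ 4)
    (hc : |c - (1 - (p + q) ^ 2 / 6)| ≤ 2 * (p + q) ^ 4) :
    |1 + 2 * a * b * c - a ^ 2 - b ^ 2 - c ^ 2| ≤ 200 * s ^ 6 := by
  have key : ∀ t u : ℝ, |t| ≤ s → |u - (1 - t ^ 2 / 6)| ≤ 2 * t ^ 4 →
      |u - (1 - t ^ 2 / 6)| ≤ 2 * s ^ 4 ∧ |t ^ 2 / 6| ≤ s ^ 2 ∧ |1 - u| ≤ 3 * s ^ 2 := by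
    intro t u ht hu
    have h2 : t ^ 2 ≤ s ^ 2 := by rw [← sq_abs]; gcongr
    have h4 : t ^ 4 ≤ s ^ 4 := by
      have : t ^ 4 = (t ^ 2) ^ 2 := by ring
      rw [this, show s ^ 4 = (s ^ 2) ^ 2 by ring]; gcongr
    have h5 : s ^ 4 ≤ s ^ 2 := pow_le_pow_of_le_one hs hs1 (by norm_num)
    have h6 : 0 ≤ t ^ 2 := sq_nonneg t
    refine ⟨by linarith, ?_, ?_⟩
    · rw [abs_of_nonneg (by positivity)]; linarith
    · rw [abs_le] at *
      constructor <;> linarith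
  obtain ⟨a1, a2, a3⟩ := key p a hp ha
  obtain ⟨b1, b2, b3⟩ := key q b hq hb
  obtain ⟨c1, c2, c3⟩ := key (p + q) c hpq hc
  set A := p ^ 2 / 6 with hA
  set B := q ^ 2 / 6 with hB
  set C := (p + q) ^ 2 / 6 with hC
  obtain ⟨d, hd⟩ : ∃ d, d = a - (1 - A) := ⟨_, rfl⟩
  obtain ⟨e, he⟩ : ∃ e, e = b - (1 - B) := ⟨_, rfl⟩
  obtain ⟨f, hf⟩ : ∃ f, f = c - (1 - C) := ⟨_, rfl⟩
  rw [← hd] at a1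
  rw [← he] at b1
  rw [← hf] at c1
  have heron : 2 * (A * B + B * C + C * A) - A ^ 2 - B ^ 2 - C ^ 2 = 0 := by
    rw [hA, hB, hC]; ring
  have E : 1 + 2 * a * b * c - a ^ 2 - b ^ 2 - c ^ 2
      = d * (A - (1 - a)) * 0 + d * (A - B - C) + d * ((1 - a) - (1 - b) - (1 - c))
        + e * (B - A - C) + e * ((1 - b) - (1 - a) - (1 - c))
        + f * (C - A - B) + f * ((1 - c) - (1 - a) - (1 - b))
        - 2 * ((1 - a) * (1 - b) * (1 - c)) := by
    have ea : a = 1 - A + d := by linarith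
    have eb : b = 1 - B + e := by linarith
    have ec : c = 1 - C + f := by linarith
    rw [ea, eb, ec]
    linear_combination heron
  have S1 : ∀ x y z w : ℝ, |x| ≤ 2 * s ^ 4 → |y| ≤ 3 * s ^ 2 → |z| ≤ 3 * s ^ 2 → |w| ≤ 3 * s ^ 2 →
      |x * (y - z - w)| ≤ 18 * s ^ 6 := by
    intro x y z w hx hy hz hw
    rw [abs_mul]
    have : |y - z - w| ≤ 9 * s ^ 2 := by
      rw [abs_le] at *
      constructor <;> linarith
    calc |x| * |y - z - w| ≤ (2 * s ^ 4) * (9 * s ^ 2) := by gcongr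
      _ = _ := by ring
  have s2 : 0 ≤ s ^ 2 := by positivity
  have T1 := S1 d A B C a1 (by linarith) (by linarith) (by linarith)
  have T2 := S1 d _ _ _ a1 a3 b3 c3
  have T3 := S1 e B A C b1 (by linarith) (by linarith) (by linarith)
  have T4 := S1 e _ _ _ b1 b3 a3 c3
  have T5 := S1 f C A B c1 (by linarith) (by linarith) (by linarith)
  have T6 := S1 f _ _ _ c1 c3 a3 b3
  have T7 : |(1 - a) * (1 - b) * (1 - c)| ≤ 27 * s ^ 6 := by
    rw [abs_mul, abs_mul]
    calc _ ≤ (3 * s ^ 2) * (3 * s ^ 2) * (3 * s ^ 2) := by gcongr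
      _ = _ := by ring
  have s6 : 0 ≤ s ^ 6 := by positivity
  rw [E]
  rw [abs_le] at *
  constructor <;> linarith

lemma sineKernel_symm (x y : ℝ) : sineKernel x y = sineKernel y x := by
  rw [sineKernel_eq, sineKernel_eq, ← Real.sinc_neg]; congr 1; ring

lemma sineKernel_self (x : ℝ) : sineKernel x x = 1 := by simp [sineKernel]

lemma int3_bound {s : ℝ} (hs0 : 0 < s) (hs : π * s ≤ 1) :
    |∫ x : Fin 3 → ℝ in Set.univ.pi (fun _ => Set.Ioo 0 s),
      Matrix.det (Matrix.of fun a b => sineKernel (x a) (x b))|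
      ≤ 200 * (π * s) ^ 6 * s ^ 3 := by
  rw [← vol_box 3 hs0, ← Real.norm_eq_abs]
  refine norm_setIntegral_le_of_norm_le_const (vol_box_lt _) ?_
  intro x hx
  have hx' : ∀ i, x i ∈ Set.Ioo 0 s := fun i => hx i trivial
  obtain ⟨p1, p2, -⟩ := kernel_arg hs (hx' 0) (hx' 1)
  obtain ⟨q1, q2, -⟩ := kernel_arg hs (hx' 1) (hx' 2)
  obtain ⟨r1, r2, -⟩ := kernel_arg hs (hx' 0) (hx' 2)
  have er : π * (x 0 - x 2) = π * (x 0 - x 1) + π * (x 1 - x 2) := by ring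
  have hp := sinc_taylor4 _ p2
  have hq := sinc_taylor4 _ q2
  have hr := sinc_taylor4 _ r2
  rw [← sineKernel_eq] at hp hq hr
  rw [er] at r1 hr
  have := det3_alg (by positivity) hs p1 q1 r1 hp hq hr
  rw [Real.norm_eq_abs, Matrix.det_fin_three]
  convert this using 2
  simp only [Matrix.of_apply, sineKernel_self, sineKernel_symm (x 1) (x 0),
    sineKernel_symm (x 2) (x 0), sineKernel_symm (x 2) (x 1)]
  ring

lemma k2_alg {p k : ℝ} (hp : |p| ≤ 1) (hk : |k - (1 - p ^ 2 / 6 + p ^ 4 / 120)| ≤ p ^ 6)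
    (hk1 : |k| ≤ 1) :
    |(1 - k ^ 2) - (p ^ 2 / 3 - 2 * p ^ 4 / 45)| ≤ 4 * p ^ 6 := by
  have h2 : p ^ 2 ≤ 1 := by rwa [sq_le_one_iff_abs_le_one]
  have h5 : 0 ≤ p ^ 2 := by positivity
  have h3 : 0 ≤ p ^ 4 := by positivity
  have h6 : 0 ≤ p ^ 6 := by positivity
  have h4 : p ^ 6 ≤ p ^ 4 := by nlinarith
  have h7 : p ^ 4 ≤ p ^ 2 := by nlinarith
  have h8 : p ^ 8 ≤ p ^ 6 := by nlinarith
  have h9 : 0 ≤ p ^ 8 := by positivity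
  obtain ⟨T, hT⟩ : ∃ T, T = 1 - p ^ 2 / 6 + p ^ 4 / 120 := ⟨_, rfl⟩
  have hT1 : |T| ≤ 1 := by rw [hT, abs_le]; constructor <;> linarith
  rw [← hT] at hk
  have hm : |(k - T) * (k + T)| ≤ 2 * p ^ 6 := by
    rw [abs_mul, mul_comm 2]
    have : |k + T| ≤ 2 := by
      rw [abs_le] at *
      constructor <;> linarith
    gcongr
  have E : (1 - k ^ 2) - (p ^ 2 / 3 - 2 * p ^ 4 / 45)
    = -((k - T) * (k + T)) + p ^ 6 / 360 - p ^ 8 / 14400 := by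
    rw [show (k - T) * (k + T) = k ^ 2 - T ^ 2 by ring, hT]; ring
  rw [E]
  rw [abs_le] at *
  constructor <;> linarith

lemma int_poly {s : ℝ} (hs0 : 0 < s) :
    ∫ x : Fin 2 → ℝ in Set.univ.pi (fun _ => Set.Ioo 0 s),
      ((π * (x 0 - x 1)) ^ 2 / 3 - 2 * (π * (x 0 - x 1)) ^ 4 / 45)
      = π ^ 2 / 18 * s ^ 4 - 2 * π ^ 4 / 675 * s ^ 6 := by
  have hmp := volume_preserving_finTwoArrow ℝ
  have hpre : Set.univ.pi (fun _ : Fin 2 => Set.Ioo 0 s)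
      = (MeasurableEquiv.finTwoArrow (α := ℝ)) ⁻¹' (Set.Ioo 0 s ×ˢ Set.Ioo 0 s) := by
    ext x
    simp [Set.mem_pi, Fin.forall_fin_two]
  have := hmp.setIntegral_preimage_emb (MeasurableEquiv.finTwoArrow (α := ℝ)).measurableEmbedding
    (fun z : ℝ × ℝ => ((π * (z.1 - z.2)) ^ 2 / 3 - 2 * (π * (z.1 - z.2)) ^ 4 / 45))
    (Set.Ioo 0 s ×ˢ Set.Ioo 0 s)
  rw [← hpre] at this
  refine Eq.trans ?_ (this.trans ?_)
  · rfl
  rw [Measure.volume_eq_prod, setIntegral_prod]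
  · simp only [← integral_Ioc_eq_integral_Ioo, ← intervalIntegral.integral_of_le hs0.le]
    have inner : ∀ x : ℝ, ∫ y in (0:ℝ)..s, ((π * (x - y)) ^ 2 / 3 - 2 * (π * (x - y)) ^ 4 / 45)
        = (-(π ^ 2 / 9 * (x - s) ^ 3) + 2 * π ^ 4 / 225 * (x - s) ^ 5)
          - (-(π ^ 2 / 9 * x ^ 3) + 2 * π ^ 4 / 225 * x ^ 5) := by
      intro x
      rw [intervalIntegral.integral_eq_sub_of_hasDerivAt
        (f := fun y => (-(π ^ 2 / 9 * (x - y) ^ 3) + 2 * π ^ 4 / 225 * (x - y) ^ 5))]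
      · simp
      · intro y _
        have h0 : HasDerivAt (fun y => x - y) (-1) y := by
          simpa using (hasDerivAt_id y).const_sub x
        refine HasDerivAt.congr_deriv ((((h0.pow 3).const_mul (π ^ 2 / 9)).neg).add
          ((h0.pow 5).const_mul (2 * π ^ 4 / 225))) ?_
        norm_num
        ring
      · exact (by fun_prop : Continuous _).intervalIntegrable _ _
    simp only [inner]
    rw [intervalIntegral.integral_eq_sub_of_hasDerivAt
        (f := fun x => (-(π ^ 2 / 36 * (x - s) ^ 4) + π ^ 4 / 675 * (x - s) ^ 6)
          - (-(π ^ 2 / 36 * x ^ 4) + π ^ 4 / 675 * x ^ 6))]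
    · ring
    · intro y _
      have h0 : HasDerivAt (fun y => y - s) 1 y := by
        simpa using (hasDerivAt_id y).sub_const s
      have h1 := hasDerivAt_id y
      refine HasDerivAt.congr_deriv
        (((((h0.pow 4).const_mul (π ^ 2 / 36)).neg).add ((h0.pow 6).const_mul (π ^ 4 / 675))).sub
        ((((h1.pow 4).const_mul (π ^ 2 / 36)).neg).add ((h1.pow 6).const_mul (π ^ 4 / 675)))) ?_
      norm_num
      ring
    · exact (by fun_prop : Continuous _).intervalIntegrable _ _
  · refine IntegrableOn.mono_set (t := Set.Icc 0 s ×ˢ Set.Icc 0 s) ?_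
      (Set.prod_mono Set.Ioo_subset_Icc_self Set.Ioo_subset_Icc_self)
    exact (by fun_prop : Continuous _).continuousOn.integrableOn_compact (isCompact_Icc.prod isCompact_Icc)

lemma int_cont_box {j : ℕ} {s : ℝ} {f : (Fin j → ℝ) → ℝ} (hf : Continuous f) :
    IntegrableOn f (Set.univ.pi (fun _ => Set.Ioo 0 s)) := by
  refine IntegrableOn.mono_set (t := Set.univ.pi (fun _ => Set.Icc 0 s)) ?_
    (Set.pi_mono fun _ _ => Set.Ioo_subset_Icc_self)
  exact hf.continuousOn.integrableOn_compact (isCompact_univ_pi fun _ => isCompact_Icc)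

lemma int2_bound {s : ℝ} (hs0 : 0 < s) (hs : π * s ≤ 1) :
    |(∫ x : Fin 2 → ℝ in Set.univ.pi (fun _ => Set.Ioo 0 s),
      Matrix.det (Matrix.of fun a b => sineKernel (x a) (x b)))
      - (π ^ 2 / 18 * s ^ 4 - 2 * π ^ 4 / 675 * s ^ 6)| ≤ 4 * (π * s) ^ 6 * s ^ 2 := by
  have e : ∀ x : Fin 2 → ℝ, Matrix.det (Matrix.of fun a b => sineKernel (x a) (x b))
      = 1 - sineKernel (x 0) (x 1) ^ 2 := by
    intro x
    rw [Matrix.det_fin_two]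
    simp only [Matrix.of_apply, sineKernel_self, sineKernel_symm (x 1) (x 0)]
    ring
  simp only [e]
  rw [← int_poly hs0, ← integral_sub, ← vol_box 2 hs0, ← Real.norm_eq_abs]
  · refine norm_setIntegral_le_of_norm_le_const (vol_box_lt _) ?_
    intro x hx
    obtain ⟨p1, p2, p3⟩ := kernel_arg hs (hx 0 trivial) (hx 1 trivial)
    have h := sinc_taylor _ p2
    rw [← sineKernel_eq] at h
    have hk : |sineKernel (x 0) (x 1)| ≤ 1 := by rw [sineKernel_eq]; exact Real.abs_sinc_le_one _
    refine (k2_alg p2 h hk).trans ?_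
    have : (π * (x 0 - x 1)) ^ 6 ≤ (π * s) ^ 6 := by
      rw [show (π * (x 0 - x 1)) ^ 6 = ((π * (x 0 - x 1)) ^ 2) ^ 3 by ring,
        show (π * s) ^ 6 = ((π * s) ^ 2) ^ 3 by ring]
      gcongr
    linarith
  · apply int_cont_box
    simp only [sineKernel_eq]
    have := Real.continuous_sinc
    fun_prop
  · apply int_cont_box
    fun_prop

lemma int1 {s : ℝ} (hs0 : 0 < s) : (∫ x : Fin 1 → ℝ in Set.univ.pi (fun _ => Set.Ioo 0 s),
      Matrix.det (Matrix.of fun a b => sineKernel (x a) (x b))) = s := by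
  have e : ∀ x : Fin 1 → ℝ, Matrix.det (Matrix.of fun a b => sineKernel (x a) (x b)) = 1 := by
    intro x
    simp [sineKernel_self]
  simp only [e]
  rw [setIntegral_const, vol_box 1 hs0]
  simp

lemma int0 {s : ℝ} (hs0 : 0 < s) : (∫ x : Fin 0 → ℝ in Set.univ.pi (fun _ => Set.Ioo 0 s),
      Matrix.det (Matrix.of fun a b => sineKernel (x a) (x b))) = 1 := by
  simp only [Matrix.det_isEmpty]
  rw [setIntegral_const, vol_box 0 hs0]
  simp

/-- Small-`s` expansion of the sine-kernel Fredholm determinant: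
`det(I − ξ𝕂ₛ) = 1 − ξs + (ξ²π²/36)s⁴ − (ξ²π⁴/675)s⁶ + O(s⁸)` as `s → 0⁺`, for fixed `ξ`. -/
theorem sineFredholmDet_small_s (ξ : ℝ) :
    (fun s : ℝ => sineFredholmDet ξ s
        - (1 - ξ * s + (ξ ^ 2 * Real.pi ^ 2 / 36) * s ^ 4
            - (ξ ^ 2 * Real.pi ^ 4 / 675) * s ^ 6))
      =O[𝓝[>] 0] (fun s : ℝ => s ^ 8) := by
  have hC : (0 : ℝ) < 4 * π ^ 2 := by positivity
  refine IsBigO.of_bound (ξ ^ 2 / 2 * (4 * π ^ 6) + |ξ| ^ 3 / 6 * (200 * π ^ 6)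
    + |ξ| ^ 4 * (4 * π ^ 2) ^ 3 * 2) ?_
  have ev1 : ∀ᶠ s : ℝ in 𝓝[>] 0, π * s < 1 := by
    refine (Tendsto.eventually_lt_const (u := 1) (v := π * 0) (by simp) ?_)
    exact (by fun_prop : Continuous fun s : ℝ => π * s).continuousAt.tendsto.mono_left nhdsWithin_le_nhds
  have ev2 : ∀ᶠ s : ℝ in 𝓝[>] 0, |ξ| * (4 * π ^ 2) * s ^ 3 < 1 / 2 := by
    refine (Tendsto.eventually_lt_const (u := 1 / 2) (v := |ξ| * (4 * π ^ 2) * 0 ^ 3) (by simp) ?_)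
    exact (by fun_prop : Continuous fun s : ℝ => |ξ| * (4 * π ^ 2) * s ^ 3).continuousAt.tendsto.mono_left
      nhdsWithin_le_nhds
  filter_upwards [ev1, ev2, self_mem_nhdsWithin] with s hs' hr hs0
  have hs0 : 0 < s := hs0
  have hs : π * s ≤ 1 := hs'.le
  have hs1 : s ≤ 1 := by nlinarith [Real.pi_gt_three]
  set F : ℕ → ℝ := fun j => ((-ξ) ^ j / (Nat.factorial j : ℝ)) *
    ∫ x : Fin j → ℝ in Set.univ.pi (fun _ => Set.Ioo 0 s),
      Matrix.det (Matrix.of fun a b => sineKernel (x a) (x b)) with hF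
  have hdef : sineFredholmDet ξ s = ∑' j, F j := rfl
  have hb : ∀ n : ℕ, ‖F (n + 4)‖ ≤ (|ξ| ^ 4 * (4 * π ^ 2) ^ 3 * s ^ 8) * (1 / 2) ^ n := by
    intro n
    have h1 := int_bound (n + 3) hs0 hs
    have hfac : (0 : ℝ) < ((n + 4).factorial : ℝ) := by positivity
    simp only [hF]
    rw [Real.norm_eq_abs, abs_mul, abs_div, abs_pow, abs_neg, abs_of_pos hfac]
    calc _ ≤ |ξ| ^ (n + 4) / ((n + 4).factorial : ℝ) *
          (((n + 4).factorial : ℝ) * (4 * (π * s) ^ 2) ^ (n + 3) * s ^ (n + 4)) := by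
            gcongr
      _ = (|ξ| ^ 4 * (4 * π ^ 2) ^ 3 * s ^ 10) * (|ξ| * (4 * π ^ 2) * s ^ 3) ^ n := by
            field_simp
            ring
      _ ≤ _ := by
            have : s ^ 10 ≤ s ^ 8 := pow_le_pow_of_le_one hs0.le hs1 (by norm_num)
            gcongr
  have hg : HasSum (fun n : ℕ => (|ξ| ^ 4 * (4 * π ^ 2) ^ 3 * s ^ 8) * (1 / 2) ^ n)
      ((|ξ| ^ 4 * (4 * π ^ 2) ^ 3 * s ^ 8) * 2) := hasSum_geometric_two.mul_left _
  have hsum4 : Summable (fun n => F (n + 4)) := Summable.of_norm_bounded hg.summable hb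
  have hsum : Summable F := (summable_nat_add_iff 4).mp hsum4
  have htail := tsum_of_norm_bounded hg hb
  have hsplit := hsum.sum_add_tsum_nat_add 4
  rw [hdef, ← hsplit]
  simp only [Finset.sum_range_succ, Finset.sum_range_zero, zero_add]
  have F0 : F 0 = 1 := by simp only [hF]; rw [int0 hs0]; simp
  have F1 : F 1 = -ξ * s := by simp only [hF]; rw [int1 hs0]; simp
  have F2 : |F 2 - ((ξ ^ 2 * π ^ 2 / 36) * s ^ 4 - (ξ ^ 2 * π ^ 4 / 675) * s ^ 6)|
      ≤ ξ ^ 2 / 2 * (4 * π ^ 6) * s ^ 8 := by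
    have h := int2_bound hs0 hs
    have hx : |ξ ^ 2 / 2| = ξ ^ 2 / 2 := abs_of_nonneg (by positivity)
    have := mul_le_mul_of_nonneg_left h (abs_nonneg (ξ ^ 2 / 2))
    rw [← abs_mul, hx] at this
    have e2 : F 2 = ξ ^ 2 / 2 * ∫ x : Fin 2 → ℝ in Set.univ.pi (fun _ => Set.Ioo 0 s),
        Matrix.det (Matrix.of fun a b => sineKernel (x a) (x b)) := by
      simp only [hF]
      rw [neg_sq, Nat.factorial_two, Nat.cast_ofNat]
    have e3 : F 2 - ((ξ ^ 2 * π ^ 2 / 36) * s ^ 4 - (ξ ^ 2 * π ^ 4 / 675) * s ^ 6)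
        = ξ ^ 2 / 2 * ((∫ x : Fin 2 → ℝ in Set.univ.pi (fun _ => Set.Ioo 0 s),
        Matrix.det (Matrix.of fun a b => sineKernel (x a) (x b)))
          - (π ^ 2 / 18 * s ^ 4 - 2 * π ^ 4 / 675 * s ^ 6)) := by
      rw [e2]; ring
    rw [e3]
    refine this.trans (le_of_eq ?_)
    ring
  have F3 : |F 3| ≤ |ξ| ^ 3 / 6 * (200 * π ^ 6) * s ^ 8 := by
    have h := int3_bound hs0 hs
    simp only [hF]
    rw [abs_mul, abs_div, abs_pow, abs_neg]
    have : s ^ 9 ≤ s ^ 8 := pow_le_pow_of_le_one hs0.le hs1 (by norm_num)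
    calc _ ≤ |ξ| ^ 3 / 6 * (200 * (π * s) ^ 6 * s ^ 3) := by
            norm_num [Nat.factorial]
            gcongr
      _ = |ξ| ^ 3 / 6 * (200 * π ^ 6) * s ^ 9 := by ring
      _ ≤ _ := by gcongr
  rw [F0, F1]
  rw [Real.norm_eq_abs] at htail ⊢
  rw [Real.norm_eq_abs, abs_of_pos (by positivity : 0 < s ^ 8)]
  rw [abs_le] at *
  constructor <;> linarith [F2.1, F2.2, F3.1, F3.2, htail.1, htail.2]
end

section
/- For every positive integer N and real s with 0 < s < N, the probability density obeys the exact small-s expansion det(I − ξ𝕂ˢ_N) = 1 − ξs + ((1 − 1/N²)ξ²π²/36)s⁴ + O(s⁵), where 𝕂ˢ_N has kernel sin(π(x−y))/(N sin(π(x−y)/N)). -/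
open Real Filter Asymptotics MeasureTheory
open scoped Topology

/-- The finite-`N` CUE kernel `K_N(x,y) = sin(π(x−y))/(N sin(π(x−y)/N))`, with value `1`
on the diagonal. -/
noncomputable def cueKernel (N : ℕ) (x y : ℝ) : ℝ :=
  if x = y then 1
  else Real.sin (Real.pi * (x - y)) / (N * Real.sin (Real.pi * (x - y) / N))

/-- The Fredholm determinant `det(I − ξ𝕂ˢ_N)` of the kernel `K_N` on `(0,s)`, via the
Fredholm series `∑_{j≥0} ((−ξ)^j/j!) ∫_{(0,s)^j} det[K_N(x_a,x_b)] dx`. -/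
noncomputable def cueFredholmDet (N : ℕ) (ξ s : ℝ) : ℝ :=
  ∑' j : ℕ, ((-ξ) ^ j / (Nat.factorial j : ℝ)) *
    ∫ x : Fin j → ℝ in Set.univ.pi (fun _ => Set.Ioo 0 s),
      Matrix.det (Matrix.of fun a b => cueKernel N (x a) (x b))

lemma cueKernel_expand (N : ℕ) (hN : 1 ≤ N) :
    ∃ C : ℝ, 0 < C ∧ ∀ x y : ℝ, |x - y| ≤ 1 / 4 →
      |cueKernel N x y - (1 - (Real.pi ^ 2 * (1 - 1 / (N : ℝ) ^ 2) / 6) * (x - y) ^ 2)|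
        ≤ C * |x - y| ^ 4 := by
  have hN1 : (1 : ℝ) ≤ N := by exact_mod_cast hN
  have hN0 : (0 : ℝ) < N := by linarith
  obtain ⟨q, hq⟩ : ∃ q : ℝ, q = ((N : ℝ) ^ 2 - 1) / 6 := ⟨_, rfl⟩
  have hq0 : 0 ≤ q := by rw [hq]; nlinarith
  refine ⟨512 * ((N : ℝ) ^ 5 + N * (1 + q) + N * q), by positivity, ?_⟩
  intro x y hxy
  by_cases h : x = y
  · subst h; simp [cueKernel]
  have hd : x - y ≠ 0 := sub_ne_zero.mpr h
  rw [cueKernel, if_neg h]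
  obtain ⟨d, hdd⟩ : ∃ d : ℝ, d = x - y := ⟨_, rfl⟩
  rw [← hdd] at hxy hd ⊢
  obtain ⟨θ, hθ⟩ : ∃ θ : ℝ, θ = Real.pi * d / N := ⟨_, rfl⟩
  have ht : Real.pi * d = N * θ := by rw [hθ]; field_simp
  rw [← hθ, ht]
  have hpi := Real.pi_pos
  have hpi4 := Real.pi_le_four
  have htabs : |(N : ℝ) * θ| ≤ 4 * |d| := by
    rw [← ht, abs_mul, abs_of_pos hpi]
    exact mul_le_mul_of_nonneg_right hpi4 (abs_nonneg d)
  have ht1 : |(N : ℝ) * θ| ≤ 1 := by linarith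
  have hθt : |θ| ≤ |(N : ℝ) * θ| := by
    rw [abs_mul, abs_of_pos hN0]; nlinarith [abs_nonneg θ]
  have hθ1 : |θ| ≤ 1 := hθt.trans ht1
  have hθd : |θ| ≤ 4 * |d| := hθt.trans htabs
  have hθ0 : 0 < |θ| := by
    rw [abs_pos, hθ]; positivity
  have e1 := Real.sin_bound ht1
  have e2 := Real.sin_bound hθ1
  have hp3 : |θ| ^ 3 ≤ |θ| := by
    calc |θ| ^ 3 ≤ |θ| ^ 1 := pow_le_pow_of_le_one hθ0.le hθ1 (by norm_num)
      _ = |θ| := pow_one _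
  have hp5 : |θ| ^ 5 ≤ |θ| := by
    calc |θ| ^ 5 ≤ |θ| ^ 1 := pow_le_pow_of_le_one hθ0.le hθ1 (by norm_num)
      _ = |θ| := pow_one _
  have hsin : |θ| / 2 ≤ |Real.sin θ| := by
    have h1 : |θ| ≤ |Real.sin θ| + |Real.sin θ - (θ - θ ^ 3 / 6)| + |θ ^ 3 / 6| := by
      calc |θ| = |Real.sin θ + -(Real.sin θ - (θ - θ ^ 3 / 6)) + θ ^ 3 / 6| := by
            congr 1; ring
        _ ≤ |Real.sin θ| + |-(Real.sin θ - (θ - θ ^ 3 / 6))| + |θ ^ 3 / 6| := abs_add_three _ _ _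
        _ = _ := by rw [abs_neg]
    have h2 : |θ ^ 3 / 6| = |θ| ^ 3 / 6 := by rw [abs_div, abs_pow]; norm_num
    rw [h2] at h1
    linarith
  have hs0 : Real.sin θ ≠ 0 := by
    intro h0; rw [h0, abs_zero] at hsin; linarith
  have hqd : (Real.pi ^ 2 * (1 - 1 / (N : ℝ) ^ 2) / 6) * d ^ 2 = q * θ ^ 2 := by
    rw [hq, hθ]; field_simp
  rw [hqd]
  have hE : Real.sin (N * θ) / (N * Real.sin θ) - (1 - q * θ ^ 2)
      = ((Real.sin (N * θ) - (N * θ - (N * θ) ^ 3 / 6))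
        + -(N * (1 - q * θ ^ 2) * (Real.sin θ - (θ - θ ^ 3 / 6)))
        + -(N * q * θ ^ 5 / 6)) / (N * Real.sin θ) := by
    rw [eq_div_iff (by positivity), sub_mul, div_mul_cancel₀ _ (by positivity), hq]
    ring
  rw [hE, abs_div, div_le_iff₀ (by positivity)]
  have hθ2 : θ ^ 2 ≤ 1 := by rw [← sq_abs]; nlinarith
  have b2 : |(N : ℝ) * (1 - q * θ ^ 2) * (Real.sin θ - (θ - θ ^ 3 / 6))|
      ≤ N * (1 + q) * |θ| ^ 5 := by
    rw [abs_mul, abs_mul, abs_of_pos hN0]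
    have : |1 - q * θ ^ 2| ≤ 1 + q := by
      rw [abs_le]; constructor <;> nlinarith [sq_nonneg θ, mul_nonneg hq0 (sq_nonneg θ)]
    have h5 : |Real.sin θ - (θ - θ ^ 3 / 6)| ≤ |θ| ^ 5 := by
      have : 0 ≤ |θ| ^ 5 := by positivity
      linarith
    gcongr
  have b3 : |(N : ℝ) * q * θ ^ 5 / 6| ≤ N * q * |θ| ^ 5 := by
    rw [abs_div, abs_mul, abs_mul, abs_of_pos hN0, abs_of_nonneg hq0, abs_pow]
    have : 0 ≤ (N : ℝ) * q * |θ| ^ 5 := by positivity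
    norm_num; linarith
  have b1 : |Real.sin (N * θ) - (N * θ - (N * θ) ^ 3 / 6)| ≤ (N : ℝ) ^ 5 * |θ| ^ 5 := by
    rw [← mul_pow]
    rw [abs_mul, abs_of_pos hN0] at e1
    have : 0 ≤ ((N : ℝ) * |θ|) ^ 5 := by positivity
    linarith
  have b4 : |θ| ^ 4 ≤ 256 * |d| ^ 4 := by
    calc |θ| ^ 4 ≤ (4 * |d|) ^ 4 := by gcongr
      _ = _ := by ring
  have hNs : |θ| / 2 ≤ |(N : ℝ) * Real.sin θ| := by
    rw [abs_mul, abs_of_pos hN0]; nlinarith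
  calc _ ≤ ((N : ℝ) ^ 5 + N * (1 + q) + N * q) * |θ| ^ 5 := by
        refine (abs_add_three _ _ _).trans ?_
        rw [abs_neg, abs_neg]; linarith
    _ = 2 * ((N : ℝ) ^ 5 + N * (1 + q) + N * q) * |θ| ^ 4 * (|θ| / 2) := by ring
    _ ≤ 2 * ((N : ℝ) ^ 5 + N * (1 + q) + N * q) * (256 * |d| ^ 4) * |(N : ℝ) * Real.sin θ| := by
        gcongr
    _ = _ := by ring

lemma cue_det_bound (j : ℕ) (M : Matrix (Fin (j + 2)) (Fin (j + 2)) ℝ) (ε : ℝ) (hε : 0 < ε)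
    (hε1 : ε ≤ 1) (hM : ∀ a b, |M a b - 1| ≤ ε) :
    |M.det| ≤ ε * ((Nat.factorial (j + 2) : ℝ) * 2 ^ (j + 2)) := by
  have h10 : (1 : Fin (j + 2)) ≠ 0 := by simp
  have h1 := Matrix.det_updateRow_add_smul_self M h10 (-1)
  have h2 : M 1 + (-1 : ℝ) • M 0 = ε • (fun b => (M 1 b - M 0 b) / ε) := by
    ext b; simp; field_simp; ring
  rw [h2, Matrix.det_updateRow_smul] at h1
  rw [← h1, abs_mul, abs_of_pos hε]
  refine mul_le_mul_of_nonneg_left ?_ hε.le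
  have := Matrix.det_le (A := M.updateRow 1 (fun b => (M 1 b - M 0 b) / ε))
    (abv := AbsoluteValue.abs) (x := 2) (by
      intro a b
      simp only [AbsoluteValue.abs_apply]
      by_cases ha : a = 1
      · subst ha
        rw [Matrix.updateRow_self, abs_div, abs_of_pos hε, div_le_iff₀ hε]
        have := abs_le.mp (hM 1 b)
        have := abs_le.mp (hM 0 b)
        rw [abs_le]; constructor <;> linarith
      · rw [Matrix.updateRow_ne ha]
        have := abs_le.mp (hM a b)
        rw [abs_le]; constructor <;> linarith)
  simpa [AbsoluteValue.abs_apply] using this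

lemma cue_vol (j : ℕ) (s : ℝ) (hs : 0 < s) :
    (volume : Measure (Fin j → ℝ)).real (Set.univ.pi fun _ => Set.Ioo 0 s) = s ^ j := by
  rw [Measure.real, Real.volume_pi_Ioo]
  simp [ENNReal.toReal_ofReal hs.le]

lemma cue_vol_lt (j : ℕ) (s : ℝ) :
    (volume : Measure (Fin j → ℝ)) (Set.univ.pi fun _ => Set.Ioo 0 s) < ⊤ := by
  rw [Real.volume_pi_Ioo]
  simp

lemma cueKernel_meas (N : ℕ) : Measurable (fun x : Fin 2 → ℝ => cueKernel N (x 0) (x 1)) := by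
  unfold cueKernel
  refine Measurable.ite ?_ (by fun_prop) (by fun_prop)
  exact measurableSet_eq_fun (by fun_prop) (by fun_prop)

lemma cue_integral_sq (s : ℝ) (hs : 0 < s) :
    ∫ x : Fin 2 → ℝ in Set.univ.pi (fun _ => Set.Ioo 0 s), (x 0 - x 1) ^ 2 = s ^ 4 / 6 := by
  have h := (volume_preserving_finTwoArrow ℝ).setIntegral_preimage_emb
    (MeasurableEquiv.measurableEmbedding _) (fun p : ℝ × ℝ => (p.1 - p.2) ^ 2)
    (Set.Ioo 0 s ×ˢ Set.Ioo 0 s)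
  have hset : (MeasurableEquiv.finTwoArrow (α := ℝ)) ⁻¹' (Set.Ioo 0 s ×ˢ Set.Ioo 0 s)
      = Set.univ.pi (fun _ => Set.Ioo 0 s) := by
    ext x
    simp [Set.mem_pi, Fin.forall_fin_two, MeasurableEquiv.finTwoArrow]
  rw [hset] at h
  have h' : ∫ x : Fin 2 → ℝ in Set.univ.pi (fun _ => Set.Ioo 0 s), (x 0 - x 1) ^ 2
      = ∫ p : ℝ × ℝ in Set.Ioo 0 s ×ˢ Set.Ioo 0 s, (p.1 - p.2) ^ 2 := h
  rw [h', Measure.volume_eq_prod, setIntegral_prod]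
  · simp only [← integral_Ioc_eq_integral_Ioo, ← intervalIntegral.integral_of_le hs.le]
    have : ∀ x : ℝ, ∫ y in (0 : ℝ)..s, (x - y) ^ 2 = s * x ^ 2 - s ^ 2 * x + s ^ 3 / 3 := by
      intro x
      rw [intervalIntegral.integral_comp_sub_left (fun u => u ^ 2) x, integral_pow]
      norm_num; ring
    simp only [this]
    rw [intervalIntegral.integral_add, intervalIntegral.integral_sub,
      intervalIntegral.integral_const_mul, intervalIntegral.integral_const_mul, integral_pow,
      integral_id, intervalIntegral.integral_const]
    · norm_num; ring
    all_goals exact Continuous.intervalIntegrable (by fun_prop) _ _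
  · refine IntegrableOn.mono_set (t := Set.Icc 0 s ×ˢ Set.Icc 0 s) ?_
      (Set.prod_mono Set.Ioo_subset_Icc_self Set.Ioo_subset_Icc_self)
    exact ContinuousOn.integrableOn_compact (isCompact_Icc.prod isCompact_Icc)
      (by fun_prop)

/-- the j-th integral -/
noncomputable def cueI (N j : ℕ) (s : ℝ) : ℝ :=
  ∫ x : Fin j → ℝ in Set.univ.pi (fun _ => Set.Ioo 0 s),
      Matrix.det (Matrix.of fun a b => cueKernel N (x a) (x b))

lemma cueKernel_symm (N : ℕ) (x y : ℝ) : cueKernel N x y = cueKernel N y x := by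
  unfold cueKernel
  by_cases h : x = y
  · subst h; rfl
  · rw [if_neg h, if_neg (Ne.symm h)]
    rw [show Real.pi * (x - y) = -(Real.pi * (y - x)) by ring, neg_div, Real.sin_neg, Real.sin_neg,
      mul_neg, neg_div_neg_eq]

lemma cueI_zero (N : ℕ) (s : ℝ) : cueI N 0 s = 1 := by
  have h := cue_vol 0 1 one_pos
  unfold cueI
  simp [Measure.real]

lemma cueI_one (N : ℕ) (s : ℝ) (hs : 0 < s) : cueI N 1 s = s := by
  have h := cue_vol 1 s hs
  unfold cueI
  simp only [Matrix.det_unique, Matrix.of_apply, cueKernel, if_true]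
  rw [setIntegral_const, h]; simp

lemma cueI_two (N : ℕ) (a C s : ℝ) (hs : 0 < s)
    (hs1 : s ≤ 1) (h : ∀ x y : ℝ, |x - y| < s →
      |cueKernel N x y - (1 - a * (x - y) ^ 2)| ≤ C * |x - y| ^ 4) :
    |cueI N 2 s - a * s ^ 4 / 3| ≤ (2 * C + (|a| + C) ^ 2) * s ^ 6 := by
  have hC : 0 ≤ C := by
    have := (abs_nonneg _).trans (h 0 (s / 2) (by rw [abs_lt]; constructor <;> linarith))
    by_contra hc
    have h2 : 0 < |0 - s / 2| ^ 4 := by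
      have : (0 - s / 2) ≠ 0 := by linarith
      positivity
    nlinarith
  have hI : cueI N 2 s = ∫ x : Fin 2 → ℝ in Set.univ.pi (fun _ => Set.Ioo 0 s),
      (1 - cueKernel N (x 0) (x 1) ^ 2) := by
    unfold cueI
    congr 1; ext x
    rw [Matrix.det_fin_two]
    simp only [Matrix.of_apply]
    rw [cueKernel_symm N (x 1) (x 0)]
    have hdiag : ∀ z, cueKernel N z z = 1 := fun z => by simp [cueKernel]
    rw [hdiag, hdiag]; ring
  have hpt : ∀ x ∈ (Set.univ.pi (fun _ => Set.Ioo 0 s) : Set (Fin 2 → ℝ)),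
      ‖(1 - cueKernel N (x 0) (x 1) ^ 2) - 2 * a * (x 0 - x 1) ^ 2‖
        ≤ (2 * C + (|a| + C) ^ 2) * s ^ 4 := by
    intro x hx
    have h0 := hx 0 trivial
    have h1 := hx 1 trivial
    simp only [Set.mem_Ioo] at h0 h1
    have hd : |x 0 - x 1| < s := by rw [abs_lt]; constructor <;> linarith
    have hk := h _ _ hd
    generalize cueKernel N (x 0) (x 1) = K at hk ⊢
    generalize x 0 - x 1 = d at hd hk ⊢
    have hd0 := abs_nonneg d
    have hd4 : |d| ^ 4 ≤ s ^ 4 := by gcongr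
    have hv : |K - 1| ≤ (|a| + C) * |d| ^ 2 := by
      calc |K - 1| = |(K - (1 - a * d ^ 2)) + -(a * d ^ 2)| := by congr 1; ring
        _ ≤ |K - (1 - a * d ^ 2)| + |-(a * d ^ 2)| := abs_add_le _ _
        _ ≤ C * |d| ^ 4 + |a| * |d| ^ 2 := by
            rw [abs_neg, abs_mul, abs_pow]; gcongr
        _ ≤ C * |d| ^ 2 + |a| * |d| ^ 2 := by
            gcongr C * ?_ + _
            exact pow_le_pow_of_le_one hd0 (by linarith) (by norm_num)
        _ = _ := by ring
    have hv2 : |(K - 1) ^ 2| ≤ (|a| + C) ^ 2 * |d| ^ 4 := by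
      rw [abs_pow]
      calc |K - 1| ^ 2 ≤ ((|a| + C) * |d| ^ 2) ^ 2 := by gcongr
        _ = _ := by ring
    rw [Real.norm_eq_abs]
    calc |1 - K ^ 2 - 2 * a * d ^ 2| = |-(2 * (K - (1 - a * d ^ 2))) + -((K - 1) ^ 2)| := by
          congr 1; ring
      _ ≤ |-(2 * (K - (1 - a * d ^ 2)))| + |-((K - 1) ^ 2)| := abs_add_le _ _
      _ ≤ 2 * (C * |d| ^ 4) + (|a| + C) ^ 2 * |d| ^ 4 := by
          rw [abs_neg, abs_neg, abs_mul, abs_two]; gcongr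
      _ = (2 * C + (|a| + C) ^ 2) * |d| ^ 4 := by ring
      _ ≤ _ := by gcongr
  have hmeas : MeasurableSet (Set.univ.pi (fun _ => Set.Ioo 0 s) : Set (Fin 2 → ℝ)) :=
    MeasurableSet.univ_pi fun _ => measurableSet_Ioo
  have hint2 : IntegrableOn (fun x : Fin 2 → ℝ => 2 * a * (x 0 - x 1) ^ 2)
      (Set.univ.pi (fun _ => Set.Ioo 0 s)) := by
    refine IntegrableOn.mono_set (t := Set.univ.pi (fun _ => Set.Icc 0 s)) ?_
      (Set.pi_mono fun _ _ => Set.Ioo_subset_Icc_self)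
    exact ContinuousOn.integrableOn_compact (isCompact_univ_pi fun _ => isCompact_Icc)
      (by fun_prop)
  have hintd : IntegrableOn (fun x : Fin 2 → ℝ =>
      (1 - cueKernel N (x 0) (x 1) ^ 2) - 2 * a * (x 0 - x 1) ^ 2)
      (Set.univ.pi (fun _ => Set.Ioo 0 s)) := by
    refine Measure.integrableOn_of_bounded (cue_vol_lt 2 s).ne ?_
      (M := (2 * C + (|a| + C) ^ 2) * s ^ 4) ((ae_restrict_mem hmeas).mono hpt)
    have := cueKernel_meas N
    exact Measurable.aestronglyMeasurable (by fun_prop)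
  have hint1 : IntegrableOn (fun x : Fin 2 → ℝ => 1 - cueKernel N (x 0) (x 1) ^ 2)
      (Set.univ.pi (fun _ => Set.Ioo 0 s)) := by
    have := hintd.add hint2
    refine this.congr_fun (fun x _ => ?_) hmeas
    simp
  have hsub := integral_sub hint1 hint2
  rw [← hI, integral_const_mul, cue_integral_sq s hs] at hsub
  have hb := norm_setIntegral_le_of_norm_le_const (cue_vol_lt 2 s) hpt
  rw [hsub, cue_vol 2 s hs, Real.norm_eq_abs] at hb
  calc |cueI N 2 s - a * s ^ 4 / 3| = |cueI N 2 s - 2 * a * (s ^ 4 / 6)| := by congr 1; ring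
    _ ≤ _ := hb
    _ = _ := by ring

lemma cueI_ge (N j : ℕ) (D s : ℝ) (hs : 0 < s) (hD : 0 < D) (hDs : D * s ^ 2 ≤ 1)
    (h : ∀ x y : ℝ, |x - y| < s → |cueKernel N x y - 1| ≤ D * s ^ 2) :
    |cueI N (j + 2) s| ≤ D * s ^ 2 * ((Nat.factorial (j + 2) : ℝ) * 2 ^ (j + 2)) * s ^ (j + 2) := by
  have hb := norm_setIntegral_le_of_norm_le_const (cue_vol_lt (j + 2) s)
    (f := fun x : Fin (j + 2) → ℝ => Matrix.det (Matrix.of fun a b => cueKernel N (x a) (x b)))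
    (C := D * s ^ 2 * ((Nat.factorial (j + 2) : ℝ) * 2 ^ (j + 2))) (by
      intro x hx
      refine cue_det_bound j _ _ (by positivity) hDs ?_
      intro a b
      apply h
      have h0 := hx a trivial
      have h1 := hx b trivial
      simp only [Set.mem_Ioo] at h0 h1
      rw [abs_lt]; constructor <;> linarith)
  rw [cue_vol _ s hs, Real.norm_eq_abs] at hb
  exact hb

theorem cueFredholmDet_small_s (N : ℕ) (hN : 1 ≤ N) (ξ : ℝ) :
    (fun s : ℝ => cueFredholmDet N ξ s
        - (1 - ξ * s
            + ((1 - 1 / (N : ℝ) ^ 2) * ξ ^ 2 * Real.pi ^ 2 / 36) * s ^ 4))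
      =O[𝓝[>] 0] (fun s : ℝ => s ^ 5) := by
  obtain ⟨C, hC, hK⟩ := cueKernel_expand N hN
  obtain ⟨a, ha⟩ : ∃ a : ℝ, a = Real.pi ^ 2 * (1 - 1 / (N : ℝ) ^ 2) / 6 := ⟨_, rfl⟩
  rw [← ha] at hK
  obtain ⟨D, hDdef⟩ : ∃ D : ℝ, D = |a| + C := ⟨_, rfl⟩
  have hD : 0 < D := by rw [hDdef]; positivity
  refine IsBigO.of_bound (ξ ^ 2 / 2 * (2 * C + (|a| + C) ^ 2) + 2 * D * (2 * |ξ|) ^ 3) ?_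
  have hev : ∀ᶠ s : ℝ in 𝓝[>] 0, D * s ^ 2 < 1 ∧ 2 * |ξ| * s < 1 / 2 ∧ s < 1 / 4 := by
    have t1 : Tendsto (fun s : ℝ => D * s ^ 2) (𝓝[>] 0) (𝓝 0) := by
      have : Continuous (fun s : ℝ => D * s ^ 2) := by fun_prop
      simpa using (this.tendsto 0).mono_left nhdsWithin_le_nhds
    have t2 : Tendsto (fun s : ℝ => 2 * |ξ| * s) (𝓝[>] 0) (𝓝 0) := by
      have : Continuous (fun s : ℝ => 2 * |ξ| * s) := by fun_prop
      simpa using (this.tendsto 0).mono_left nhdsWithin_le_nhds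
    have t3 : Tendsto (fun s : ℝ => s) (𝓝[>] 0) (𝓝 0) := nhdsWithin_le_nhds
    exact (t1.eventually_lt_const one_pos).and
      ((t2.eventually_lt_const (by norm_num)).and (t3.eventually_lt_const (by norm_num)))
  filter_upwards [hev, self_mem_nhdsWithin] with s ⟨hs1, hs2, hs3⟩ hs
  have hs : 0 < s := hs
  have hK1 : ∀ x y : ℝ, |x - y| < s → |cueKernel N x y - 1| ≤ D * s ^ 2 := by
    intro x y hxy
    have hk := hK x y (by linarith)
    generalize cueKernel N x y = K at hk ⊢
    generalize x - y = d at hxy hk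
    have hd0 := abs_nonneg d
    calc |K - 1| = |(K - (1 - a * d ^ 2)) + -(a * d ^ 2)| := by congr 1; ring
      _ ≤ |K - (1 - a * d ^ 2)| + |-(a * d ^ 2)| := abs_add_le _ _
      _ ≤ C * |d| ^ 4 + |a| * |d| ^ 2 := by
          rw [abs_neg, abs_mul, abs_pow]; gcongr
      _ ≤ C * |d| ^ 2 + |a| * |d| ^ 2 := by
          gcongr C * ?_ + _
          exact pow_le_pow_of_le_one hd0 (by linarith) (by norm_num)
      _ = D * |d| ^ 2 := by rw [hDdef]; ring
      _ ≤ _ := by gcongr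
  have h2 := cueI_two N a C s hs (by linarith) (fun x y hxy => hK x y (by linarith))
  obtain ⟨f, hf⟩ : ∃ f : ℕ → ℝ, f = fun j => ((-ξ) ^ j / (Nat.factorial j : ℝ)) * cueI N j s :=
    ⟨_, rfl⟩
  have hdet : cueFredholmDet N ξ s = ∑' j, f j := by rw [hf]; rfl
  obtain ⟨r, hr⟩ : ∃ r : ℝ, r = 2 * |ξ| * s := ⟨_, rfl⟩
  rw [← hr] at hs2
  have hr0 : 0 ≤ r := by rw [hr]; positivity
  have hfb : ∀ j, ‖f (j + 3)‖ ≤ D * s ^ 2 * r ^ 3 * r ^ j := by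
    intro j
    have := cueI_ge N (j + 1) D s hs hD hs1.le hK1
    rw [hf, Real.norm_eq_abs]
    simp only
    rw [abs_mul, abs_div, abs_pow, abs_neg, Nat.abs_cast]
    have hfac : (0 : ℝ) < (Nat.factorial (j + 3) : ℝ) := by positivity
    calc |ξ| ^ (j + 3) / (Nat.factorial (j + 3) : ℝ) * |cueI N (j + 3) s|
        ≤ |ξ| ^ (j + 3) / (Nat.factorial (j + 3) : ℝ) *
          (D * s ^ 2 * ((Nat.factorial (j + 3) : ℝ) * 2 ^ (j + 3)) * s ^ (j + 3)) := by
          gcongr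
      _ = D * s ^ 2 * (|ξ| ^ (j + 3) * 2 ^ (j + 3) * s ^ (j + 3)) := by field_simp
      _ = _ := by rw [hr, ← mul_pow, ← mul_pow, mul_assoc (D * s ^ 2), ← pow_add]; ring
  have hgeo : HasSum (fun j : ℕ => D * s ^ 2 * r ^ 3 * r ^ j) (D * s ^ 2 * r ^ 3 * (1 - r)⁻¹) :=
    (hasSum_geometric_of_lt_one hr0 (by linarith)).mul_left _
  have htail := tsum_of_norm_bounded hgeo hfb
  have hsum3 : Summable (fun j => f (j + 3)) := Summable.of_norm_bounded hgeo.summable hfb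
  have hsum : Summable f := (summable_nat_add_iff 3).mp hsum3
  rw [hdet, ← hsum.sum_add_tsum_nat_add 3]
  have hf0 : f 0 = 1 := by simp [hf, cueI_zero]
  have hf1 : f 1 = -ξ * s := by simp [hf, cueI_one N s hs]
  have hf2 : f 2 = ξ ^ 2 / 2 * cueI N 2 s := by simp [hf]
  rw [Finset.sum_range_succ, Finset.sum_range_succ, Finset.sum_range_one, hf0, hf1, hf2]
  rw [Real.norm_eq_abs] at htail
  rw [Real.norm_eq_abs, Real.norm_eq_abs, abs_of_pos (by positivity : 0 < s ^ 5)]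
  have hinv : (1 - r)⁻¹ ≤ 2 := by
    rw [inv_le_comm₀ (by linarith) (by norm_num)]; linarith
  calc _ = |ξ ^ 2 / 2 * (cueI N 2 s - a * s ^ 4 / 3) + ∑' j, f (j + 3)| := by
        congr 1; rw [ha]; ring
    _ ≤ |ξ ^ 2 / 2 * (cueI N 2 s - a * s ^ 4 / 3)| + |∑' j, f (j + 3)| := abs_add_le _ _
    _ ≤ ξ ^ 2 / 2 * ((2 * C + (|a| + C) ^ 2) * s ^ 6) + D * s ^ 2 * r ^ 3 * 2 := by
        rw [abs_mul, abs_of_nonneg (by positivity : 0 ≤ ξ ^ 2 / 2)]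
        gcongr
        exact htail.trans (by gcongr)
    _ ≤ ξ ^ 2 / 2 * ((2 * C + (|a| + C) ^ 2) * s ^ 5) + D * s ^ 2 * r ^ 3 * 2 := by
        gcongr ξ ^ 2 / 2 * (_ * ?_) + _
        exact pow_le_pow_of_le_one hs.le (by linarith) (by norm_num)
    _ = _ := by rw [hr]; ring
end
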